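/- Let Γ ≤ Δ be countable discrete groups and let T ⊆ Δ be a transversal for the left cosets Δ/Γ. For every invariant random subgroup θ of Γ there exists an invariant random subgroup CIND_Γ^Δ(θ) of Δ such that for every finite F ⊆ Δ: CIND_Γ^Δ(θ)(N_F^Δ) = 0 if F ⊄ core_Δ(Γ), and CIND_Γ^Δ(θ)(N_F^Δ) = ∏_{t∈T} θ(N_{t⁻¹Ft}^Γ) if F ⊆ core_Δ(Γ); moreover CIND_Γ^Δ(θ) concentrates on Sub(core_Δ(Γ)), i.e., CIND_Γ^Δ(θ)(Sub(core_Δ(Γ))) = 1, and the measure so defined is independent of the choice of transversal T. -/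

import Mathlib

open MeasureTheory

namespace IRSPaper


/-! ## Basic setup: the space of subgroups, invariant random subgroups -/

/-- The conjugation action of a group on its space of subgroups: `g • H = gHg⁻¹`. -/
def conjSub {G : Type*} [Group G] (g : G) (H : Subgroup G) : Subgroup G :=
  Subgroup.map ((MulAut.conj g).toMonoidHom) H

/-- The topology on the space of subgroups of `G`, induced from the product topology
on `G → Bool` (i.e. the topology of `2^G`). -/
noncomputable instance instTopSub (G : Type*) [Group G] : TopologicalSpace (Subgroup G) :=
  TopologicalSpace.induced
    (fun (H : Subgroup G) (g : G) => @decide (g ∈ H) (Classical.dec _)) inferInstance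

/-- The Borel σ-algebra on the space of subgroups. -/
noncomputable instance instMeasSub (G : Type*) [Group G] : MeasurableSpace (Subgroup G) :=
  borel _

instance instBorelSub (G : Type*) [Group G] : BorelSpace (Subgroup G) := ⟨rfl⟩

/-- An invariant random subgroup: a Borel probability measure on `Sub(G)` which is invariant
under the conjugation action of `G`. -/
def IsIRS {G : Type*} [Group G] (θ : Measure (Subgroup G)) : Prop :=
  IsProbabilityMeasure θ ∧ ∀ g : G, Measure.map (conjSub g) θ = θ

/-- The basic set `N_F = {H ∈ Sub(G) : F ⊆ H}`. -/
def NSet {G : Type*} [Group G] (F : Set G) : Set (Subgroup G) :=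
  {H : Subgroup G | F ⊆ (H : Set G)}

/-- For `Γ ≤ Δ` and `S ⊆ Δ`, the set of subgroups of `Γ` containing every element of `Γ`
whose image in `Δ` lies in `S`.  When `S = t⁻¹Ft ⊆ Γ`, this is exactly the basic set
`N_{t⁻¹Ft}^Γ ⊆ Sub(Γ)`. -/
def NpullSet {Δ : Type*} [Group Δ] (Γ : Subgroup Δ) (S : Set Δ) : Set (Subgroup ↥Γ) :=
  {Λ : Subgroup ↥Γ | ∀ x : ↥Γ, (x : Δ) ∈ S → x ∈ Λ}

/-- `T` is a transversal for the left cosets `Δ/Γ`: each left coset `dΓ` contains exactly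
one element of `T`. -/
def IsLeftTransversal {Δ : Type*} [Group Δ] (Γ : Subgroup Δ) (T : Set Δ) : Prop :=
  ∀ d : Δ, ∃! t : Δ, t ∈ T ∧ d⁻¹ * t ∈ Γ

/-- The defining property of the co-induced invariant random subgroup
`ν = CIND_Γ^Δ(θ)` (with respect to the transversal `T`):  for every finite `F ⊆ Δ`,
`ν(N_F) = 0` if `F ⊄ core_Δ(Γ)` and `ν(N_F) = ∏_{t ∈ T} θ(N_{t⁻¹Ft}^Γ)` if `F ⊆ core_Δ(Γ)`. -/
def CindSpec {Δ : Type*} [Group Δ] (Γ : Subgroup Δ) (T : Set Δ)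
    (θ : Measure (Subgroup ↥Γ)) (ν : Measure (Subgroup Δ)) : Prop :=
  ∀ F : Finset Δ,
    (¬ (F : Set Δ) ⊆ (Γ.normalCore : Set Δ) → ν (NSet (F : Set Δ)) = 0) ∧
    ((F : Set Δ) ⊆ (Γ.normalCore : Set Δ) →
      ν (NSet (F : Set Δ)) =
        ∏' t : T, θ (NpullSet Γ ((fun d => (t : Δ)⁻¹ * d * (t : Δ)) '' (F : Set Δ))))

/-- Ergodicity of a (not necessarily probability-) measure-preserving action given by
an explicit family of maps: every invariant measurable set is null or conull. -/
def ErgodicAct {G α : Type*} [MeasurableSpace α] (act : G → α → α) (μ : Measure α) : Prop :=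
  ∀ s : Set α, MeasurableSet s → (∀ g : G, act g ⁻¹' s = s) → μ s = 0 ∨ μ sᶜ = 0

/-- Weak mixing of an action: the diagonal action on the square is ergodic. -/
def WeaklyMixingAct {G α : Type*} [MeasurableSpace α] (act : G → α → α) (μ : Measure α) : Prop :=
  ErgodicAct (fun (g : G) (p : α × α) => (act g p.1, act g p.2)) (μ.prod μ)

/-- A measure is non-atomic (has no atoms) if every singleton is null. -/
def NonAtomicMeasure {α : Type*} [MeasurableSpace α] (μ : Measure α) : Prop :=
  ∀ x : α, μ {x} = 0

/-- The kernel of an IRS `θ` of `Γ`: the set of `γ ∈ Γ` with `θ(N_γ) = 1`.  (For a probability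
measure this set is a subgroup; taking `Subgroup.closure` makes it a `Subgroup` on the nose.) -/
def kerIRS {Δ : Type*} [Group Δ] (Γ : Subgroup Δ) (θ : Measure (Subgroup ↥Γ)) : Subgroup ↥Γ :=
  Subgroup.closure {x : ↥Γ | θ {Λ : Subgroup ↥Γ | x ∈ Λ} = 1}

/-- `core_Δ(ker(θ))`, viewed as a subgroup of `Δ`. -/
def coreKer {Δ : Type*} [Group Δ] (Γ : Subgroup Δ) (θ : Measure (Subgroup ↥Γ)) : Subgroup Δ :=
  ((kerIRS Γ θ).map Γ.subtype).normalCore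

/-!
Choose independent `θ`-random subgroups `L t ≤ Γ`, one for each `t ∈ T`, and let `ν` be the law of
`⨅ t, t (L t) t⁻¹`. A set `F ⊆ core_Δ(Γ)` lies in this intersection iff `t⁻¹Ft ⊆ L t` for every
`t`, so the product formula is independence, and the intersection lies in `core_Δ(Γ)` since `T`
meets every coset.

Replacing `t` by `t * c` with `c ∈ Γ` amounts to conjugating `L t` by `c`, which does not change
its law. Hence `ν` does not depend on `T`. Conjugating the intersection by `g ∈ Δ` replaces `T` by
the transversal `g T`, so invariance of `ν` is a special case of independence of the transversal.
-/

section Conjugation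

variable {G : Type*} [Group G]

theorem mem_conjSub {g x : G} {H : Subgroup G} : x ∈ conjSub g H ↔ g⁻¹ * x * g ∈ H :=
  Subgroup.mem_map_equiv.trans (by rw [MulAut.conj_symm_apply])

theorem conjSub_mul (g h : G) (H : Subgroup G) : conjSub (g * h) H = conjSub g (conjSub h H) := by
  ext x
  simp only [mem_conjSub, mul_inv_rev, mul_assoc]

theorem conjSub_iInf {ι : Sort*} (g : G) (H : ι → Subgroup G) :
    conjSub g (⨅ i, H i) = ⨅ i, conjSub g (H i) := by
  ext x
  simp only [mem_conjSub, Subgroup.mem_iInf]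

theorem map_subtype_conjSub {Γ : Subgroup G} (c : Γ) (Λ : Subgroup Γ) :
    (conjSub c Λ).map Γ.subtype = conjSub (c : G) (Λ.map Γ.subtype) := by
  simp only [conjSub, Subgroup.map_map]
  rfl

end Conjugation

section Measurability

variable {G : Type*} [Group G]

theorem measurableSet_mem (g : G) : MeasurableSet {H : Subgroup G | g ∈ H} := by
  have hcont : Continuous fun (H : Subgroup G) (g : G) => @decide (g ∈ H) (Classical.dec _) :=
    continuous_induced_dom
  convert ((isOpen_discrete {true}).preimage ((continuous_apply g).comp hcont)).measurableSet
    using 1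
  ext H
  simp

theorem measurable_of_measurableSet_mem [Countable G] {α : Type*} [MeasurableSpace α]
    {f : α → Subgroup G} (hf : ∀ g, MeasurableSet {a | g ∈ f a}) : Measurable f := by
  have hborel : instMeasSub G = MeasurableSpace.comap
      (fun (H : Subgroup G) (g : G) => @decide (g ∈ H) (Classical.dec _)) inferInstance := by
    rw [BorelSpace.measurable_eq (α := G → Bool)]
    exact borel_comap
  rw [hborel, measurable_comap_iff, measurable_pi_iff]
  intro g
  refine measurable_to_bool ?_
  convert hf g using 1
  ext a
  simp

theorem measurable_conjSub [Countable G] (g : G) : Measurable (conjSub g) :=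
  measurable_of_measurableSet_mem fun x => by
    simpa only [mem_conjSub] using measurableSet_mem (g⁻¹ * x * g)

theorem measurableSet_NSet {F : Set G} (hF : F.Countable) : MeasurableSet (NSet F) := by
  have hinter : NSet F = ⋂ g ∈ F, {H : Subgroup G | g ∈ H} := by
    ext H
    simp [NSet, Set.subset_def]
  rw [hinter]
  exact MeasurableSet.biInter hF fun g _ => measurableSet_mem g

theorem measurableSet_NpullSet [Countable G] (Γ : Subgroup G) (S : Set G) :
    MeasurableSet (NpullSet Γ S) :=
  measurableSet_NSet (Set.to_countable {x : Γ | (x : G) ∈ S})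

end Measurability

section CoinducedSubgroup

variable {Δ : Type*} [Group Δ] {Γ : Subgroup Δ} {ι κ : Type*}

/-- The co-induced subgroup `⋂ᵢ sᵢ Lᵢ sᵢ⁻¹` of a family of subgroups `Lᵢ ≤ Γ`, where `s` is meant
to enumerate a transversal for `Δ/Γ`. The transversal is a family rather than a set so that
its translate `i ↦ g * s i` has the same index type. -/
def coindSubgroup (s : ι → Δ) (L : ι → Subgroup Γ) : Subgroup Δ :=
  ⨅ i, conjSub (s i) ((L i).map Γ.subtype)

theorem mem_coindSubgroup {s : ι → Δ} {L : ι → Subgroup Γ} {x : Δ} :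
    x ∈ coindSubgroup s L ↔ ∀ i, ∃ h : (s i)⁻¹ * x * s i ∈ Γ, (⟨_, h⟩ : Γ) ∈ L i := by
  simp [coindSubgroup, Subgroup.mem_iInf, mem_conjSub]

theorem conjSub_coindSubgroup (g : Δ) (s : ι → Δ) (L : ι → Subgroup Γ) :
    conjSub g (coindSubgroup s L) = coindSubgroup (fun i => g * s i) L := by
  simp only [coindSubgroup, conjSub_iInf, conjSub_mul]

theorem coindSubgroup_mul_right (s : ι → Δ) (c : ι → Γ) (L : ι → Subgroup Γ) :
    coindSubgroup (fun i => s i * c i) L = coindSubgroup s fun i => conjSub (c i) (L i) := by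
  simp only [coindSubgroup, conjSub_mul, map_subtype_conjSub]

theorem coindSubgroup_comp_equiv (e : ι ≃ κ) (s : κ → Δ) (L : κ → Subgroup Γ) :
    coindSubgroup (s ∘ e) (L ∘ e) = coindSubgroup s L :=
  e.iInf_comp (g := fun k => conjSub (s k) ((L k).map Γ.subtype))

theorem coindSubgroup_le_normalCore {s : ι → Δ}
    (hs : Function.Surjective fun i => (s i : Δ ⧸ Γ)) (L : ι → Subgroup Γ) :
    coindSubgroup s L ≤ Γ.normalCore := by
  intro x hx d
  obtain ⟨i, hi⟩ := hs (d⁻¹ : Δ)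
  have hd : d * s i ∈ Γ := by simpa using QuotientGroup.eq.1 hi.symm
  obtain ⟨hconj, -⟩ := mem_coindSubgroup.1 hx i
  simpa [mul_assoc] using Γ.mul_mem (Γ.mul_mem hd hconj) (Γ.inv_mem hd)

theorem coindSubgroup_preimage_NSet (s : ι → Δ) {F : Set Δ} (hF : F ⊆ Γ.normalCore) :
    coindSubgroup s ⁻¹' NSet F =
      Set.univ.pi fun i => NpullSet Γ ((fun d => (s i)⁻¹ * d * s i) '' F) := by
  ext L
  constructor
  · rintro hL i - y ⟨x, hx, hxy⟩
    obtain ⟨hconj, hmem⟩ := mem_coindSubgroup.1 (hL hx) i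
    obtain rfl : ⟨_, hconj⟩ = y := Subtype.ext hxy
    exact hmem
  · intro hL x hx
    refine mem_coindSubgroup.2 fun i => ?_
    have hconj : (s i)⁻¹ * x * s i ∈ Γ := by simpa using hF hx (s i)⁻¹
    exact ⟨hconj, hL i trivial ⟨_, hconj⟩ ⟨x, hx, rfl⟩⟩

theorem measurable_coindSubgroup [Countable Δ] [Countable ι] (s : ι → Δ) :
    Measurable (coindSubgroup (Γ := Γ) s) := by
  refine measurable_of_measurableSet_mem fun x => ?_
  simp only [mem_coindSubgroup, Set.ofPred_forall, Set.ofPred_exists]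
  exact MeasurableSet.iInter fun i => MeasurableSet.iUnion fun h =>
    (measurableSet_mem (⟨_, h⟩ : Γ)).preimage (measurable_pi_apply i)

end CoinducedSubgroup

section CoinducedMeasure

variable {Δ : Type*} [Group Δ] {Γ : Subgroup Δ} {ι κ : Type*} {θ : Measure (Subgroup Γ)}

/-- The co-induced measure `CIND_Γ^Δ(θ)`: the law of `⋂ᵢ sᵢ Lᵢ sᵢ⁻¹` for independent `θ`-random
subgroups `Lᵢ` of `Γ`, where `s` is meant to enumerate a transversal for `Δ/Γ`. -/
noncomputable def coindMeasure (s : ι → Δ) (θ : Measure (Subgroup Γ)) : Measure (Subgroup Δ) :=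
  (Measure.infinitePi fun _ : ι => θ).map (coindSubgroup s)

variable [Countable Δ]

theorem coindMeasure_comp_equiv [IsProbabilityMeasure θ] [Countable κ] (e : ι ≃ κ) (s : κ → Δ) :
    coindMeasure (s ∘ e) θ = coindMeasure s θ := by
  have hcomp : coindSubgroup (Γ := Γ) s ∘ MeasurableEquiv.piCongrLeft (fun _ => Subgroup Γ) e =
      coindSubgroup (s ∘ e) := by
    funext L
    rw [Function.comp_apply, ← coindSubgroup_comp_equiv e s]
    congr 1
    funext i
    exact MeasurableEquiv.piCongrLeft_apply_apply _ _ i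
  rw [coindMeasure, coindMeasure, ← Measure.infinitePi_map_piCongrLeft (fun _ => θ) e,
    Measure.map_map (measurable_coindSubgroup s) (MeasurableEquiv.measurable _), hcomp]

variable [Countable ι]

theorem isProbabilityMeasure_coindMeasure [IsProbabilityMeasure θ] (s : ι → Δ) :
    IsProbabilityMeasure (coindMeasure s θ) :=
  Measure.isProbabilityMeasure_map (measurable_coindSubgroup s).aemeasurable

theorem coindMeasure_NSet_eq_zero {s : ι → Δ} (hs : Function.Surjective fun i => (s i : Δ ⧸ Γ))
    {F : Set Δ} (hF : ¬ F ⊆ Γ.normalCore) : coindMeasure s θ (NSet F) = 0 := by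
  have hempty : coindSubgroup (Γ := Γ) s ⁻¹' NSet F = ∅ :=
    Set.eq_empty_of_forall_notMem fun L hL =>
      hF (Set.Subset.trans hL (coindSubgroup_le_normalCore hs L))
  rw [coindMeasure, Measure.map_apply (measurable_coindSubgroup s)
    (measurableSet_NSet F.to_countable), hempty, measure_empty]

theorem coindMeasure_NSet_eq_tprod [IsProbabilityMeasure θ] (s : ι → Δ) {F : Set Δ}
    (hF : F ⊆ Γ.normalCore) :
    coindMeasure s θ (NSet F) =
      ∏' i, θ (NpullSet Γ ((fun d => (s i)⁻¹ * d * s i) '' F)) := by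
  rw [coindMeasure, Measure.map_apply (measurable_coindSubgroup s)
    (measurableSet_NSet F.to_countable), coindSubgroup_preimage_NSet s hF,
    Measure.infinitePi_pi_univ _ fun _ => measurableSet_NpullSet Γ _]

theorem map_conjSub_coindMeasure (g : Δ) (s : ι → Δ) :
    (coindMeasure s θ).map (conjSub g) = coindMeasure (fun i => g * s i) θ := by
  rw [coindMeasure, Measure.map_map (measurable_conjSub g) (measurable_coindSubgroup s)]
  exact congrArg (Measure.map · _) (funext (conjSub_coindSubgroup g s))

theorem coindMeasure_mul_right (hθ : IsIRS θ) (s : ι → Δ) (c : ι → Γ) :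
    coindMeasure (fun i => s i * c i) θ = coindMeasure s θ := by
  have := hθ.1
  have hmeas : Measurable fun (L : ι → Subgroup Γ) i => conjSub (c i) (L i) :=
    measurable_pi_lambda _ fun i => (measurable_conjSub (c i)).comp (measurable_pi_apply i)
  have hconj : (Measure.infinitePi fun _ : ι => θ).map (fun L i => conjSub (c i) (L i)) =
      Measure.infinitePi fun _ => θ := by
    rw [Measure.infinitePi_map_pi _ fun i => measurable_conjSub (c i)]
    simp only [hθ.2]
  calc coindMeasure (fun i => s i * c i) θ
      = (Measure.infinitePi fun _ : ι => θ).map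
          (coindSubgroup s ∘ fun L i => conjSub (c i) (L i)) :=
        congrArg (Measure.map · _) (funext (coindSubgroup_mul_right s c))
    _ = coindMeasure s θ := by
        rw [← Measure.map_map (measurable_coindSubgroup s) hmeas, hconj, coindMeasure]

theorem coindMeasure_eq_of_bijective [Countable κ] (hθ : IsIRS θ) {s : ι → Δ} {s' : κ → Δ}
    (hs : Function.Bijective fun i => (s i : Δ ⧸ Γ))
    (hs' : Function.Bijective fun k => (s' k : Δ ⧸ Γ)) :
    coindMeasure s θ = coindMeasure s' θ := by
  have := hθ.1
  let e : ι ≃ κ := (Equiv.ofBijective _ hs).trans (Equiv.ofBijective _ hs').symm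
  have he (i : ι) : (s i : Δ ⧸ Γ) = s' (e i) :=
    ((Equiv.ofBijective _ hs').apply_symm_apply (s i : Δ ⧸ Γ)).symm
  let c (i : ι) : Γ := ⟨(s i)⁻¹ * s' (e i), QuotientGroup.eq.1 (he i)⟩
  have hc : (fun i => s i * c i) = s' ∘ e := funext fun i => mul_inv_cancel_left _ _
  rw [← coindMeasure_mul_right hθ s c, hc, coindMeasure_comp_equiv]

theorem isIRS_coindMeasure (hθ : IsIRS θ) {s : ι → Δ}
    (hs : Function.Bijective fun i => (s i : Δ ⧸ Γ)) : IsIRS (coindMeasure s θ) := by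
  have := hθ.1
  refine ⟨isProbabilityMeasure_coindMeasure s, fun g => ?_⟩
  have hgs : Function.Bijective fun i => ((g * s i : Δ) : Δ ⧸ Γ) :=
    (MulAction.bijective g).comp hs
  rw [map_conjSub_coindMeasure, coindMeasure_eq_of_bijective hθ hgs hs]

end CoinducedMeasure

section Transversal

variable {Δ : Type*} [Group Δ] {Γ : Subgroup Δ} {T : Set Δ}

theorem IsLeftTransversal.bijective_mk (hT : IsLeftTransversal Γ T) :
    Function.Bijective fun t : T => ((t : Δ) : Δ ⧸ Γ) := by
  refine (Function.bijective_iff_existsUnique _).2 (QuotientGroup.forall_mk.2 fun d => ?_)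
  obtain ⟨t, ⟨htT, htd⟩, huniq⟩ := hT d
  exact ⟨⟨t, htT⟩, (QuotientGroup.eq.2 htd).symm, fun u hu =>
    Subtype.ext (huniq u ⟨u.2, QuotientGroup.eq.1 hu.symm⟩)⟩

variable [Countable Δ] {θ : Measure (Subgroup Γ)}

theorem IsLeftTransversal.cindSpec_coindMeasure [IsProbabilityMeasure θ]
    (hT : IsLeftTransversal Γ T) : CindSpec Γ T θ (coindMeasure ((↑) : T → Δ) θ) := fun _ =>
  ⟨coindMeasure_NSet_eq_zero hT.bijective_mk.surjective, coindMeasure_NSet_eq_tprod _⟩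

theorem CindSpec.ae_le_normalCore {ν : Measure (Subgroup Δ)} (hν : CindSpec Γ T θ ν) :
    ∀ᵐ H ∂ν, H ≤ Γ.normalCore := by
  refine ae_all_iff.2 fun x => ?_
  by_cases hx : x ∈ Γ.normalCore
  · exact ae_of_all _ fun _ _ => hx
  · have hnull : ν (NSet {x}) = 0 := by simpa using (hν {x}).1 (by simpa using hx)
    filter_upwards [measure_eq_zero_iff_ae_notMem.1 hnull] with H hH hxH
    exact absurd (Set.singleton_subset_iff.2 hxH) hH

end Transversal

/-- **Co-induction of invariant random subgroups** (Theorem 1.1 / Theorem 5.1).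
Let `Γ ≤ Δ` be countable groups and `T ⊆ Δ` a transversal for the left cosets `Δ/Γ`.
For every IRS `θ` of `Γ` there is an IRS `ν = CIND_Γ^Δ(θ)` of `Δ` with
`ν(N_F) = 0` if `F ⊄ core_Δ(Γ)` and `ν(N_F) = ∏_{t∈T} θ(N_{t⁻¹Ft}^Γ)` if `F ⊆ core_Δ(Γ)`;
moreover `ν` concentrates on `Sub(core_Δ(Γ))`, and the same formulas hold for any other
transversal (i.e. `ν` is independent of the choice of transversal). -/
theorem coinduction_of_IRS_exists {Δ : Type*} [Group Δ] [Countable Δ] (Γ : Subgroup Δ)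
    (T : Set Δ) (hT : IsLeftTransversal Γ T)
    (θ : Measure (Subgroup ↥Γ)) (hθ : IsIRS θ) :
    ∃ ν : Measure (Subgroup Δ),
      IsIRS ν ∧ CindSpec Γ T θ ν ∧
      ν {H : Subgroup Δ | H ≤ Γ.normalCore} = 1 ∧
      ∀ T' : Set Δ, IsLeftTransversal Γ T' → CindSpec Γ T' θ ν := by
  have := hθ.1
  have hirs : IsIRS (coindMeasure ((↑) : T → Δ) θ) := isIRS_coindMeasure hθ hT.bijective_mk
  have hspec : CindSpec Γ T θ (coindMeasure ((↑) : T → Δ) θ) := hT.cindSpec_coindMeasure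
  refine ⟨coindMeasure ((↑) : T → Δ) θ, hirs, hspec, ?_, fun T' hT' => ?_⟩
  · have := hirs.1
    rw [measure_congr (Filter.eventuallyEq_univ.2 hspec.ae_le_normalCore), measure_univ]
  · rw [coindMeasure_eq_of_bijective hθ hT.bijective_mk hT'.bijective_mk]
    exact hT'.cindSpec_coindMeasure

end IRSPaper
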